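/- arXiv:1707.01282 — 3 statements merged into one kernel-verified Lean document; each statement's English description precedes it below -/
import Mathlib

section
/- Let m, k be integers. If either (4m−1)·π₃/2 ≤ l₁ ≤ (4m+1)·π₃/2 and (4k−1)·π₃/2 ≤ l₂ ≤ (4k+1)·π₃/2, or (4m+1)·π₃/2 ≤ l₁ ≤ (4m+3)·π₃/2 and (4k+1)·π₃/2 ≤ l₂ ≤ (4k+3)·π₃/2, then (s(l₁ + l₂))² = [ (s(l₁)·√(1 − (s(l₂))⁶) + s(l₂)·√(1 − (s(l₁))⁶))² + ((s(l₁))³·s(l₂) − s(l₁)·(s(l₂))³)² ] / ( 1 + 4·(s(l₁))⁴·(s(l₂))² + 4·(s(l₁))²·(s(l₂))⁴ ). -/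
/-!
Write `p = s'`. The energy identity `p² + s⁶ = 1` makes the right-hand side, with the two square
roots replaced by `p l₂` and `p l₁`, a polynomial expression in `s` and `p`. Along a line
`l₁ + l₂ = const` this expression has zero derivative (an algebraic identity modulo the two energy
relations), so it equals its value at `l₂ = 0`, which is `s (l₁ + l₂)²`: this is
`sleaf_addition`.

Since `√(1 - s⁶) = |p|`, it remains to see that `p l₁ * p l₂ ≥ 0` on the given domains. Up to its
first positive zero `T`, the function `p` is positive and `s` maps `(0, T)` bijectively onto
`(0, 1)`, so the change of variables `t = s l` gives `∫₀¹ dt / √(1 - t⁶) = T`. Hence `T = π₃ / 2`.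
By uniqueness for the ODE, `s` is odd and `s (l + 2T) = -s l`, which determines the sign of `p`
everywhere.
-/

/-- Energy conservation for `f'' = -3 f⁵`, normalised at a point where the energy is `1`. -/
lemma sleaf_energy {f p : ℝ → ℝ} (hf : ∀ t, HasDerivAt f (p t) t)
    (hp : ∀ t, HasDerivAt p (-3 * f t ^ 5) t) {t₀ : ℝ} (h : p t₀ ^ 2 + f t₀ ^ 6 = 1) (t : ℝ) :
    p t ^ 2 + f t ^ 6 = 1 := by
  have hd : ∀ t, HasDerivAt (fun t => p t ^ 2 + f t ^ 6) 0 t := fun t => by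
    refine (((hp t).fun_pow 2).fun_add ((hf t).fun_pow 6)).congr_deriv ?_
    push_cast
    ring
  rw [← h]
  exact is_const_of_deriv_eq_zero (fun t => (hd t).differentiableAt) (fun t => (hd t).deriv) t t₀

/-- Uniqueness of unit-energy solutions of `f'' = -3 f⁵`: unit energy confines the phase curve to
the square `[-1, 1]²`, on which the vector field is Lipschitz. -/
lemma sleaf_unique {f p g q : ℝ → ℝ} (hf : ∀ t, HasDerivAt f (p t) t)
    (hp : ∀ t, HasDerivAt p (-3 * f t ^ 5) t) (hg : ∀ t, HasDerivAt g (q t) t)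
    (hq : ∀ t, HasDerivAt q (-3 * g t ^ 5) t) {t₀ : ℝ} (h : p t₀ ^ 2 + f t₀ ^ 6 = 1)
    (hfg : f t₀ = g t₀) (hpq : p t₀ = q t₀) (t : ℝ) : f t = g t ∧ p t = q t := by
  let v : ℝ × ℝ → ℝ × ℝ := fun z => (z.2, -3 * z.1 ^ 5)
  let S : Set (ℝ × ℝ) := Set.Icc (-1) 1 ×ˢ Set.Icc (-1) 1
  have hv : ContDiff ℝ 1 v := by fun_prop
  obtain ⟨K, hK⟩ := LocallyLipschitzOn.exists_lipschitzOnWith_of_compact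
    (s := S) (isCompact_Icc.prod isCompact_Icc) hv.locallyLipschitz.locallyLipschitzOn
  have mem : ∀ {a b : ℝ}, b ^ 2 + a ^ 6 = 1 → (a, b) ∈ S := fun {a b} hab => by
    have ha : |a| ≤ 1 := by
      by_contra! hc
      have := one_lt_pow₀ hc (n := 6) (by norm_num)
      rw [Even.pow_abs (by decide)] at this
      nlinarith [sq_nonneg b]
    have hb : |b| ≤ 1 := by
      rw [← sq_le_one_iff_abs_le_one]
      nlinarith [sq_nonneg (a ^ 3)]
    exact ⟨abs_le.1 ha, abs_le.1 hb⟩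
  have key := ODE_solution_unique_univ (v := fun _ => v) (s := fun _ => S) (t₀ := t₀)
    (f := fun t => (f t, p t)) (g := fun t => (g t, q t)) (fun _ => hK)
    (fun t => ⟨(hf t).prodMk (hp t), mem (sleaf_energy hf hp h t)⟩)
    (fun t => ⟨(hg t).prodMk (hq t), mem (sleaf_energy hg hq (by rw [← hfg, ← hpq]; exact h) t)⟩)
    (by simp [hfg, hpq])
  simpa using congrFun key t

/-- The addition formula for `sleaf₃`, with `s'` in place of the square roots; it is valid for all
arguments. -/
lemma sleaf_addition {s p : ℝ → ℝ} (hs : ∀ t, HasDerivAt s (p t) t)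
    (hp : ∀ t, HasDerivAt p (-3 * s t ^ 5) t) (h0 : s 0 = 0) (h1 : p 0 = 1) (a b : ℝ) :
    s (a + b) ^ 2 =
      ((s a * p b + s b * p a) ^ 2 + (s a ^ 3 * s b - s a * s b ^ 3) ^ 2) /
        (1 + 4 * s a ^ 4 * s b ^ 2 + 4 * s a ^ 2 * s b ^ 4) := by
  have en := sleaf_energy hs hp (t₀ := 0) (by simp [h0, h1])
  set c := a + b with hc
  have hs2 : ∀ t, HasDerivAt (fun t => s (c - t)) (-p (c - t)) t := fun t => by
    simpa using (hs (c - t)).comp_const_sub c t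
  have hp2 : ∀ t, HasDerivAt (fun t => p (c - t)) (3 * s (c - t) ^ 5) t := fun t => by
    simpa using (hp (c - t)).comp_const_sub c t
  have hpos : ∀ t, 1 + 4 * s t ^ 4 * s (c - t) ^ 2 + 4 * s t ^ 2 * s (c - t) ^ 4 ≠ 0 :=
    fun t => by positivity
  have hd : ∀ t, HasDerivAt (fun t =>
      ((s t * p (c - t) + s (c - t) * p t) ^ 2
        + (s t ^ 3 * s (c - t) - s t * s (c - t) ^ 3) ^ 2) /
      (1 + 4 * s t ^ 4 * s (c - t) ^ 2 + 4 * s t ^ 2 * s (c - t) ^ 4)) 0 t := fun t => by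
    have hN := ((((hs t).fun_mul (hp2 t)).fun_add ((hs2 t).fun_mul (hp t))).fun_pow 2).fun_add
      (((((hs t).fun_pow 3).fun_mul (hs2 t)).fun_sub
        ((hs t).fun_mul ((hs2 t).fun_pow 3))).fun_pow 2)
    have hD := (((((hs t).fun_pow 4).const_mul 4).fun_mul ((hs2 t).fun_pow 2)).const_add 1).fun_add
      ((((hs t).fun_pow 2).const_mul 4).fun_mul ((hs2 t).fun_pow 4))
    refine (hN.fun_div hD (hpos t)).congr_deriv ?_
    rw [div_eq_zero_iff]
    left
    have e1 := en t
    have e2 := en (c - t)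
    generalize s t = x at *
    generalize s (c - t) = y at *
    generalize p t = u at *
    generalize p (c - t) = w at *
    push_cast
    -- The multipliers reduce `u²` and `w²` in `numerator * (denominator)'`; the remaining terms
    -- of the quotient rule are linear in `u` and `w`.
    linear_combination
      (-2 * y ^ 2 * (u * (8 * x ^ 3 * y ^ 2 + 4 * x * y ^ 4)
          - w * (4 * x ^ 4 * y + 8 * x ^ 2 * y ^ 3))
        - 4 * x * y * (8 * x ^ 3 * y ^ 2 + 4 * x * y ^ 4) * w) * e1
      + (-2 * x ^ 2 * (u * (8 * x ^ 3 * y ^ 2 + 4 * x * y ^ 4)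
          - w * (4 * x ^ 4 * y + 8 * x ^ 2 * y ^ 3))
        + 4 * x * y * (4 * x ^ 4 * y + 8 * x ^ 2 * y ^ 3) * u) * e2
  have := is_const_of_deriv_eq_zero (fun t => (hd t).differentiableAt) (fun t => (hd t).deriv) a c
  simp only [sub_self, h0, h1] at this
  rw [show c - a = b by rw [hc]; ring] at this
  rw [this]
  simp

/-- The derivative `s'` vanishes somewhere on `[0, ∞)`: otherwise `s` increases there, so `s'`
decreases at least linearly from time `1` on. -/
lemma sleaf_exists_zero {s p : ℝ → ℝ} (hs : ∀ t, HasDerivAt s (p t) t)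
    (hp : ∀ t, HasDerivAt p (-3 * s t ^ 5) t) (h0 : s 0 = 0) (h1 : p 0 = 1) :
    ∃ t, 0 ≤ t ∧ p t = 0 := by
  have cp : Continuous p := continuous_iff_continuousAt.2 fun t => (hp t).continuousAt
  have cs : Continuous s := continuous_iff_continuousAt.2 fun t => (hs t).continuousAt
  by_contra! hne
  have pos : ∀ t, 0 ≤ t → 0 < p t := fun t ht => by
    by_contra! hle
    obtain ⟨r, hr, hr'⟩ := intermediate_value_Icc' ht cp.continuousOn
      (show (0 : ℝ) ∈ Set.Icc (p t) (p 0) from ⟨hle, by rw [h1]; norm_num⟩)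
    exact hne r hr.1 hr'
  have mono : StrictMonoOn s (Set.Ici 0) :=
    strictMonoOn_of_deriv_pos (convex_Ici 0) cs.continuousOn fun t ht => by
      rw [(hs t).deriv]
      rw [interior_Ici] at ht
      exact pos t (le_of_lt ht)
  have s1 : 0 < s 1 := by
    have := mono (Set.self_mem_Ici) (show (1 : ℝ) ∈ Set.Ici 0 by simp) one_pos
    rwa [h0] at this
  have hc : 0 < 3 * s 1 ^ 5 := by positivity
  have anti : AntitoneOn (fun t => p t + 3 * s 1 ^ 5 * t) (Set.Ici 1) := by
    have hd : ∀ t, HasDerivAt (fun t => p t + 3 * s 1 ^ 5 * t)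
        (-3 * s t ^ 5 + 3 * s 1 ^ 5 * 1) t := fun t =>
      (hp t).fun_add ((hasDerivAt_id t).const_mul _)
    refine antitoneOn_of_deriv_nonpos (convex_Ici 1)
      (fun t _ => (hd t).continuousAt.continuousWithinAt)
      (fun t _ => (hd t).differentiableAt.differentiableWithinAt) fun t ht => ?_
    rw [(hd t).deriv]
    rw [interior_Ici, Set.mem_Ioi] at ht
    have h1t : s 1 ≤ s t := mono.monotoneOn (by simp) (by simp; linarith) ht.le
    have := pow_le_pow_left₀ s1.le h1t 5
    linarith
  have hR : 0 ≤ p 1 / (3 * s 1 ^ 5) := div_nonneg (pos 1 zero_le_one).le hc.le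
  have hle := anti (Set.self_mem_Ici)
    (show 1 + p 1 / (3 * s 1 ^ 5) ∈ Set.Ici (1 : ℝ) by simpa using hR) (by linarith)
  have hm : 3 * s 1 ^ 5 * (1 + p 1 / (3 * s 1 ^ 5)) = 3 * s 1 ^ 5 + p 1 := by
    rw [mul_add, mul_div_cancel₀ _ hc.ne', mul_one]
  simp only [hm] at hle
  linarith [pos (1 + p 1 / (3 * s 1 ^ 5)) (by linarith)]

/-- The quarter period: `∫₀¹ dt / √(1 - t⁶)` is the first positive zero of `s'`. -/
lemma sleaf_quarter {s p : ℝ → ℝ} (hs : ∀ t, HasDerivAt s (p t) t)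
    (hp : ∀ t, HasDerivAt p (-3 * s t ^ 5) t) (h0 : s 0 = 0) (h1 : p 0 = 1) {T : ℝ}
    (hT : T = ∫ t in (0 : ℝ)..1, 1 / Real.sqrt (1 - t ^ 6)) :
    0 < T ∧ p T = 0 ∧ s T = 1 ∧ ∀ t, 0 ≤ t → t < T → 0 < p t := by
  have cp : Continuous p := continuous_iff_continuousAt.2 fun t => (hp t).continuousAt
  have cs : Continuous s := continuous_iff_continuousAt.2 fun t => (hs t).continuousAt
  have en := sleaf_energy hs hp (t₀ := 0) (by simp [h0, h1])
  obtain ⟨R, ⟨hR0, hpR⟩, hRmin⟩ : ∃ R, IsLeast {t | 0 ≤ t ∧ p t = 0} R :=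
    ⟨_, IsClosed.isLeast_csInf
      ((isClosed_le continuous_const continuous_id).inter (isClosed_eq cp continuous_const))
      (sleaf_exists_zero hs hp h0 h1) ⟨0, fun _ h => h.1⟩⟩
  have pos : ∀ t, 0 ≤ t → t < R → 0 < p t := fun t ht htR => by
    by_contra! hle
    obtain ⟨r, hr, hr'⟩ := intermediate_value_Icc' ht cp.continuousOn
      (show (0 : ℝ) ∈ Set.Icc (p t) (p 0) from ⟨hle, by rw [h1]; norm_num⟩)
    exact absurd (hRmin ⟨hr.1, hr'⟩) (not_le.2 (hr.2.trans_lt htR))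
  have Rpos : 0 < R := by
    refine lt_of_le_of_ne hR0 fun h => ?_
    rw [← h, h1] at hpR
    exact one_ne_zero hpR
  have mono : StrictMonoOn s (Set.Icc 0 R) :=
    strictMonoOn_of_deriv_pos (convex_Icc 0 R) cs.continuousOn fun t ht => by
      rw [(hs t).deriv]
      rw [interior_Icc] at ht
      exact pos t ht.1.le ht.2
  have sR : s R = 1 := by
    have h6 := en R
    have hpos : 0 < s R := h0 ▸ mono (Set.left_mem_Icc.2 hR0) (Set.right_mem_Icc.2 hR0) Rpos
    rw [hpR] at h6
    exact (pow_eq_one_iff_of_nonneg hpos.le (by norm_num : 6 ≠ 0)).1 (by linarith)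
  have himg : s '' Set.Ioo 0 R = Set.Ioo 0 1 := by
    apply Set.Subset.antisymm
    · rintro _ ⟨t, ht, rfl⟩
      have ht' := Set.Ioo_subset_Icc_self ht
      have ha := mono (Set.left_mem_Icc.2 hR0) ht' ht.1
      have hb := mono ht' (Set.right_mem_Icc.2 hR0) ht.2
      rw [h0] at ha
      rw [sR] at hb
      exact ⟨ha, hb⟩
    · have := intermediate_value_Ioo hR0 cs.continuousOn
      rwa [h0, sR] at this
  have hint : ∫ t in (0 : ℝ)..1, 1 / Real.sqrt (1 - t ^ 6) = R := by
    rw [intervalIntegral.integral_of_le zero_le_one, MeasureTheory.integral_Ioc_eq_integral_Ioo,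
      ← himg, MeasureTheory.integral_image_eq_integral_abs_deriv_smul measurableSet_Ioo
        (fun t _ => (hs t).hasDerivWithinAt) (mono.injOn.mono Set.Ioo_subset_Icc_self)]
    rw [MeasureTheory.setIntegral_congr_fun (g := fun _ => (1 : ℝ)) measurableSet_Ioo]
    · simp [hR0]
    · intro t ht
      have ht' := pos t ht.1.le ht.2
      have : 1 - s t ^ 6 = p t ^ 2 := by linarith [en t]
      simp only [this, Real.sqrt_sq ht'.le, abs_of_pos ht', smul_eq_mul]
      field_simp
  rw [hT, hint]
  exact ⟨Rpos, hpR, sR, pos⟩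

/-- The sign of `s'` on the half-periods around multiples of the full period `4T`. -/
lemma sleaf_sign {s p : ℝ → ℝ} (hs : ∀ t, HasDerivAt s (p t) t)
    (hp : ∀ t, HasDerivAt p (-3 * s t ^ 5) t) (h0 : s 0 = 0) (h1 : p 0 = 1) {T : ℝ}
    (hT : T = ∫ t in (0 : ℝ)..1, 1 / Real.sqrt (1 - t ^ 6)) (m : ℤ) (l : ℝ) :
    ((4 * (m : ℝ) - 1) * T ≤ l → l ≤ (4 * (m : ℝ) + 1) * T → 0 ≤ p l) ∧
    ((4 * (m : ℝ) + 1) * T ≤ l → l ≤ (4 * (m : ℝ) + 3) * T → p l ≤ 0) := by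
  obtain ⟨Tpos, pT, sT, pos⟩ := sleaf_quarter hs hp h0 h1 hT
  have odd : ∀ t, s t = -s (-t) ∧ p t = p (-t) := by
    refine sleaf_unique hs hp (g := fun t => -s (-t)) (q := fun t => p (-t)) (t₀ := 0) ?_ ?_ ?_ ?_ ?_
    · intro t
      simpa using ((hs (-t)).comp t (hasDerivAt_neg t)).fun_neg
    · intro t
      refine ((hp (-t)).comp t (hasDerivAt_neg t)).congr_deriv ?_
      ring
    all_goals simp [h0, h1]
  have anti : ∀ t, s t = -s (t + 2 * T) ∧ p t = -p (t + 2 * T) := by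
    -- The initial data are compared at `-T`, where both solutions equal `-1` with zero slope.
    have hsT : s (-T) = -1 := by linarith [(odd T).1]
    have hpT : p (-T) = 0 := by rw [← (odd T).2, pT]
    refine sleaf_unique hs hp (g := fun t => -s (t + 2 * T)) (q := fun t => -p (t + 2 * T))
      (t₀ := -T) ?_ ?_ ?_ ?_ ?_
    · intro t
      exact ((hs (t + 2 * T)).comp_add_const t (2 * T)).fun_neg
    · intro t
      refine ((hp (t + 2 * T)).comp_add_const t (2 * T)).fun_neg.congr_deriv ?_
      ring
    · rw [hsT, hpT]; norm_num
    · rw [show -T + 2 * T = T by ring, sT, hsT]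
    · rw [show -T + 2 * T = T by ring, pT, hpT, neg_zero]
  have per : Function.Periodic p (4 * T) := fun t => by
    rw [(anti t).2, (anti (t + 2 * T)).2, neg_neg]
    congr 1
    ring
  have nonneg : ∀ t, -T ≤ t → t ≤ T → 0 ≤ p t := by
    have aux : ∀ t, 0 ≤ t → t ≤ T → 0 ≤ p t := fun t ht htT => by
      rcases htT.lt_or_eq with h | h
      · exact (pos t ht h).le
      · rw [h, pT]
    intro t h1 h2
    rcases le_total 0 t with h | h
    · exact aux t h h2
    · rw [(odd t).2]
      exact aux _ (by linarith) (by linarith)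
  have hl : p l = p (l - m * (4 * T)) := (per.sub_int_mul_eq m).symm
  constructor
  · intro ha hb
    rw [hl]
    exact nonneg _ (by linarith) (by linarith)
  · intro ha hb
    have h := (anti (l - m * (4 * T) - 2 * T)).2
    rw [sub_add_cancel, ← hl] at h
    have := nonneg (l - m * (4 * T) - 2 * T) (by linarith) (by linarith)
    linarith


theorem stmt_11 (s : ℝ → ℝ)
    (hs : Differentiable ℝ s) (hs' : Differentiable ℝ (deriv s))
    (hode : ∀ l : ℝ, deriv (deriv s) l = -3 * s l ^ 5)
    (h0 : s 0 = 0) (h1 : deriv s 0 = 1)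
    (π₃ : ℝ) (hπ₃ : π₃ = 2 * ∫ t in (0 : ℝ)..1, 1 / Real.sqrt (1 - t ^ 6))
    (m k : ℤ) (l₁ l₂ : ℝ)
    (hdom :
      ((4 * (m : ℝ) - 1) * π₃ / 2 ≤ l₁ ∧ l₁ ≤ (4 * (m : ℝ) + 1) * π₃ / 2 ∧
        (4 * (k : ℝ) - 1) * π₃ / 2 ≤ l₂ ∧ l₂ ≤ (4 * (k : ℝ) + 1) * π₃ / 2) ∨
      ((4 * (m : ℝ) + 1) * π₃ / 2 ≤ l₁ ∧ l₁ ≤ (4 * (m : ℝ) + 3) * π₃ / 2 ∧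
        (4 * (k : ℝ) + 1) * π₃ / 2 ≤ l₂ ∧ l₂ ≤ (4 * (k : ℝ) + 3) * π₃ / 2)) :
    (s (l₁ + l₂)) ^ 2 =
      ((s l₁ * Real.sqrt (1 - (s l₂) ^ 6) + s l₂ * Real.sqrt (1 - (s l₁) ^ 6)) ^ 2
          + ((s l₁) ^ 3 * s l₂ - s l₁ * (s l₂) ^ 3) ^ 2) /
        (1 + 4 * (s l₁) ^ 4 * (s l₂) ^ 2 + 4 * (s l₁) ^ 2 * (s l₂) ^ 4) := by
  have ds : ∀ t, HasDerivAt s (deriv s t) t := fun t => (hs t).hasDerivAt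
  have dp : ∀ t, HasDerivAt (deriv s) (-3 * s t ^ 5) t := fun t => hode t ▸ (hs' t).hasDerivAt
  have en := sleaf_energy ds dp (t₀ := 0) (by simp [h0, h1])
  have sgn := sleaf_sign ds dp h0 h1 (T := π₃ / 2) (by rw [hπ₃]; ring)
  have hprod : 0 ≤ deriv s l₁ * deriv s l₂ := by
    simp only [mul_div_assoc] at hdom
    rcases hdom with ⟨a, b, c, d⟩ | ⟨a, b, c, d⟩
    · exact mul_nonneg ((sgn m l₁).1 a b) ((sgn k l₂).1 c d)
    · exact mul_nonneg_of_nonpos_of_nonpos ((sgn m l₁).2 a b) ((sgn k l₂).2 c d)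
  have hsqrt : ∀ t, Real.sqrt (1 - s t ^ 6) = |deriv s t| := fun t => by
    rw [← Real.sqrt_sq_eq_abs, ← en t]
    congr 1
    ring
  have hcross : |deriv s l₁| * |deriv s l₂| = deriv s l₁ * deriv s l₂ := by
    rw [← abs_mul, abs_of_nonneg hprod]
  rw [sleaf_addition ds dp h0 h1, hsqrt, hsqrt]
  congr 2
  linear_combination
    -(s l₁ ^ 2) * sq_abs (deriv s l₂) - s l₂ ^ 2 * sq_abs (deriv s l₁) - 2 * s l₁ * s l₂ * hcross
end

section
/- Let m, k be integers. If either (4m+1)·π₃/2 ≤ l₁ ≤ (4m+3)·π₃/2 and (4k−1)·π₃/2 ≤ l₂ ≤ (4k+1)·π₃/2, or (4m−1)·π₃/2 ≤ l₁ ≤ (4m+1)·π₃/2 and (4k+1)·π₃/2 ≤ l₂ ≤ (4k+3)·π₃/2, then (s(l₁ + l₂))² = [ (s(l₁)·√(1 − (s(l₂))⁶) − s(l₂)·√(1 − (s(l₁))⁶))² + ((s(l₁))³·s(l₂) − s(l₁)·(s(l₂))³)² ] / ( 1 + 4·(s(l₁))⁴·(s(l₂))² + 4·(s(l₁))²·(s(l₂))⁴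 ). -/
/-!
Write `p = s'`. Multiplying the equation by `2 p` gives the energy identity `p² + s⁶ = 1`, so
`√(1 - s⁶) = |p|`. The core of the proof is the addition formula, valid for all real `a`, `b`,

`s(a+b)² (1 + 4 s(a)⁴ s(b)² + 4 s(a)² s(b)⁴) = (s(a) p(b) + s(b) p(a))² + (s(a)³ s(b) - s(a) s(b)³)²`,

obtained by checking that the quotient is constant along every line `a + b = c`: its derivative
vanishes identically modulo the energy identity, and its value at `(c, 0)` is `s(c)²`
(`leaf_addition`).

The formula with square roots follows wherever `p(l₁)` and `p(l₂)` have opposite signs. The signs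
come from the quarter period. If `T` is the first positive zero of `p`, then `s` increases from
`0` to `1` on `[0, T]`, and the substitution `t = s(l)` gives `T = ∫₀¹ dt / √(1 - t⁶) = π₃ / 2`
(`leaf_quarter_period`). By uniqueness for the initial value problem, `s` is odd and symmetric
about `T`; so `p` is even and `p(l + 2T) = -p(l)`, whence `p ≥ 0` on `[(4n-1)T, (4n+1)T]` and
`p ≤ 0` on `[(4n+1)T, (4n+3)T]`.
-/

open Set

theorem leaf_energy {s p : ℝ → ℝ} (hs : ∀ l, HasDerivAt s (p l) l)
    (hp : ∀ l, HasDerivAt p (-3 * s l ^ 5) l) (h0 : s 0 = 0) (h1 : p 0 = 1) (l : ℝ) :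
    p l ^ 2 + s l ^ 6 = 1 := by
  have h : ∀ l, HasDerivAt (fun l => p l ^ 2 + s l ^ 6) 0 l := by
    intro l
    refine (((hp l).pow 2).add ((hs l).pow 6)).congr_deriv ?_
    push_cast
    ring
  have := is_const_of_deriv_eq_zero (fun l => (h l).differentiableAt) (fun l => (h l).deriv) l 0
  simpa [h0, h1] using this

/-- The addition formula in terms of the derivative `p` instead of square roots; no restriction
on the arguments is needed. -/
theorem leaf_addition {s p : ℝ → ℝ} (hs : ∀ l, HasDerivAt s (p l) l)
    (hp : ∀ l, HasDerivAt p (-3 * s l ^ 5) l) (h0 : s 0 = 0) (h1 : p 0 = 1) (a b : ℝ) :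
    s (a + b) ^ 2 = ((s a * p b + s b * p a) ^ 2 + (s a ^ 3 * s b - s a * s b ^ 3) ^ 2) /
      (1 + 4 * s a ^ 4 * s b ^ 2 + 4 * s a ^ 2 * s b ^ 4) := by
  set c := a + b with hc
  have hs2 : ∀ x, HasDerivAt (fun x => s (c - x)) (-p (c - x)) x := fun x =>
    HasDerivAt.comp_const_sub c x (hs (c - x))
  have hp2 : ∀ x, HasDerivAt (fun x => p (c - x)) (-(-3 * s (c - x) ^ 5)) x := fun x =>
    HasDerivAt.comp_const_sub c x (hp (c - x))
  have h : ∀ x, HasDerivAt (fun x =>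
      ((s x * p (c - x) + s (c - x) * p x) ^ 2 +
        (s x ^ 3 * s (c - x) - s x * s (c - x) ^ 3) ^ 2) /
      (1 + 4 * s x ^ 4 * s (c - x) ^ 2 + 4 * s x ^ 2 * s (c - x) ^ 4)) 0 x := by
    intro x
    have hD : 1 + 4 * s x ^ 4 * s (c - x) ^ 2 + 4 * s x ^ 2 * s (c - x) ^ 4 ≠ 0 := by positivity
    have hN := ((((hs x).mul (hp2 x)).add ((hs2 x).mul (hp x))).pow 2).add
      (((((hs x).pow 3).mul (hs2 x)).sub ((hs x).mul ((hs2 x).pow 3))).pow 2)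
    have hE := (((((hs x).pow 4).const_mul 4).mul ((hs2 x).pow 2)).const_add 1).add
      ((((hs x).pow 2).const_mul 4).mul ((hs2 x).pow 4))
    have e1 := leaf_energy hs hp h0 h1 x
    have e2 := leaf_energy hs hp h0 h1 (c - x)
    refine (hN.div hE hD).congr_deriv ?_
    refine div_eq_zero_iff.2 (Or.inl ?_)
    simp only [Pi.mul_apply, Pi.add_apply, Pi.pow_apply, Pi.sub_apply]
    push_cast
    generalize s x = X at *
    generalize s (c - x) = Y at *
    generalize p x = P at *
    generalize p (c - x) = Q at *
    -- The derivative of the denominator is `α * P - β * Q` with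
    -- `α = 16 X³Y² + 8 X Y⁴` and `β = 8 X⁴Y + 16 X²Y³`.
    linear_combination
      (-(Y ^ 2 * ((16 * X ^ 3 * Y ^ 2 + 8 * X * Y ^ 4) * P - (8 * X ^ 4 * Y + 16 * X ^ 2 * Y ^ 3) * Q)
        + 2 * X * Y * (16 * X ^ 3 * Y ^ 2 + 8 * X * Y ^ 4) * Q)) * e1 +
      (-(X ^ 2 * ((16 * X ^ 3 * Y ^ 2 + 8 * X * Y ^ 4) * P - (8 * X ^ 4 * Y + 16 * X ^ 2 * Y ^ 3) * Q)
        - 2 * X * Y * (8 * X ^ 4 * Y + 16 * X ^ 2 * Y ^ 3) * P)) * e2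
  have := is_const_of_deriv_eq_zero (fun l => (h l).differentiableAt) (fun l => (h l).deriv) a c
  have hcb : c - a = b := by rw [hc]; ring
  simp only [hcb, sub_self, h0, h1] at this
  rw [this]
  simp

/-- Uniqueness for `s'' = -3 s⁵` among solutions bounded by `1`, a region on which the vector
field is Lipschitz. -/
theorem leaf_unique {s p u q : ℝ → ℝ} (hs : ∀ l, HasDerivAt s (p l) l)
    (hp : ∀ l, HasDerivAt p (-3 * s l ^ 5) l) (hsb : ∀ l, s l ∈ Icc (-1 : ℝ) 1)
    (hu : ∀ l, HasDerivAt u (q l) l)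
    (hq : ∀ l, HasDerivAt q (-3 * u l ^ 5) l) (hub : ∀ l, u l ∈ Icc (-1 : ℝ) 1)
    (t : ℝ) (hsu : s t = u t) (hpq : p t = q t) : ∀ l, s l = u l ∧ p l = q l := by
  have hlip : LipschitzOnWith 15 (fun x : ℝ => -3 * x ^ 5) (Icc (-1) 1) := by
    have hd : ∀ x : ℝ, HasDerivAt (fun x : ℝ => -3 * x ^ 5) (-15 * x ^ 4) x := by
      intro x
      refine ((hasDerivAt_pow 5 x).const_mul (-3)).congr_deriv ?_
      push_cast
      ring
    refine (convex_Icc (-1 : ℝ) 1).lipschitzOnWith_of_nnnorm_deriv_le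
      (fun x _ => (hd x).differentiableAt) (fun x hx => ?_)
    rw [(hd x).deriv, ← NNReal.coe_le_coe, coe_nnnorm, Real.norm_eq_abs]
    have h4 : x ^ 4 ≤ 1 := by
      rw [← Even.pow_abs (by decide)]
      exact pow_le_one₀ (abs_nonneg x) (abs_le.2 hx)
    have h4' : 0 ≤ x ^ 4 := by positivity
    rw [abs_le]
    constructor <;> push_cast <;> linarith
  have hv : LipschitzOnWith (max 1 (15 * 1)) (fun z : ℝ × ℝ => (z.2, -3 * z.1 ^ 5))
      (Icc (-1) 1 ×ˢ univ) := by
    refine LipschitzOnWith.prodMk (LipschitzWith.prod_snd.lipschitzOnWith) ?_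
    exact hlip.comp (LipschitzWith.prod_fst.lipschitzOnWith) (fun z hz => hz.1)
  have key := ODE_solution_unique_univ (v := fun _ z => (z.2, -3 * z.1 ^ 5))
    (s := fun _ => Icc (-1 : ℝ) 1 ×ˢ (univ : Set ℝ)) (f := fun l => (s l, p l))
    (g := fun l => (u l, q l)) (t₀ := t) (fun _ => hv)
    (fun l => ⟨(hs l).prodMk (hp l), hsb l, mem_univ _⟩)
    (fun l => ⟨(hu l).prodMk (hq l), hub l, mem_univ _⟩) (by simp [hsu, hpq])
  intro l
  simpa using congrFun key l

theorem leaf_mem_Icc {s p : ℝ → ℝ} (hs : ∀ l, HasDerivAt s (p l) l)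
    (hp : ∀ l, HasDerivAt p (-3 * s l ^ 5) l) (h0 : s 0 = 0) (h1 : p 0 = 1) (l : ℝ) :
    s l ∈ Icc (-1 : ℝ) 1 := by
  have e := leaf_energy hs hp h0 h1 l
  rw [mem_Icc, ← abs_le]
  by_contra! h
  have := one_lt_pow₀ h (n := 6) (by norm_num)
  rw [Even.pow_abs (by decide)] at this
  nlinarith [sq_nonneg (p l)]

/-- If `p` had no positive zero, then `s` would stay above `s 1 > 0` on `[1, ∞)`, so `p` would
decrease there at least linearly and become negative. -/
theorem leaf_exists_zero {s p : ℝ → ℝ} (hs : ∀ l, HasDerivAt s (p l) l)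
    (hp : ∀ l, HasDerivAt p (-3 * s l ^ 5) l) (h0 : s 0 = 0) (h1 : p 0 = 1) :
    ∃ x, 0 ≤ x ∧ p x = 0 := by
  by_contra! hne
  have hpc : Continuous p := continuous_iff_continuousAt.2 fun l => (hp l).continuousAt
  have hsc : Continuous s := continuous_iff_continuousAt.2 fun l => (hs l).continuousAt
  have hpos : ∀ x, 0 ≤ x → 0 < p x := by
    intro x hx
    by_contra! hle
    obtain ⟨z, hz, hz0⟩ := intermediate_value_Icc' hx hpc.continuousOn
      (show (0 : ℝ) ∈ Icc (p x) (p 0) by simp [hle, h1])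
    exact hne z hz.1 hz0
  have hmono : StrictMonoOn s (Ici 0) := by
    refine strictMonoOn_of_deriv_pos (convex_Ici 0) hsc.continuousOn fun x hx => ?_
    rw [interior_Ici] at hx
    rw [(hs x).deriv]
    exact hpos x (le_of_lt hx)
  have hs1 : 0 < s 1 := by
    have := hmono (show (0 : ℝ) ∈ Ici 0 by simp) (show (1 : ℝ) ∈ Ici 0 by simp) one_pos
    rwa [h0] at this
  have hd : ∀ x, HasDerivAt (fun x => p x + 3 * s 1 ^ 5 * x) (-3 * s x ^ 5 + 3 * s 1 ^ 5) x := by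
    intro x
    refine ((hp x).add ((hasDerivAt_id x).const_mul (3 * s 1 ^ 5))).congr_deriv ?_
    ring
  have hanti : AntitoneOn (fun x => p x + 3 * s 1 ^ 5 * x) (Ici 1) := by
    refine antitoneOn_of_deriv_nonpos (convex_Ici 1)
      (fun x _ => (hd x).continuousAt.continuousWithinAt)
      (fun x _ => (hd x).differentiableAt.differentiableWithinAt) fun x hx => ?_
    rw [interior_Ici, mem_Ioi] at hx
    have hle : s 1 ≤ s x := hmono.monotoneOn (show (1 : ℝ) ∈ Ici 0 by simp)
      (show x ∈ Ici (0 : ℝ) from by rw [mem_Ici]; linarith) hx.le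
    rw [(hd x).deriv]
    have := pow_le_pow_left₀ hs1.le hle 5
    linarith
  have hc : 0 < 3 * s 1 ^ 5 := by positivity
  have hp1 := hpos 1 zero_le_one
  have hX : 0 < p 1 / (3 * s 1 ^ 5) := by positivity
  have h := hanti (show (1 : ℝ) ∈ Ici 1 by simp)
    (show 1 + p 1 / (3 * s 1 ^ 5) ∈ Ici (1 : ℝ) from by rw [mem_Ici]; linarith) (by linarith)
  have hq := hpos (1 + p 1 / (3 * s 1 ^ 5)) (by linarith)
  have : 3 * s 1 ^ 5 * (1 + p 1 / (3 * s 1 ^ 5)) = 3 * s 1 ^ 5 + p 1 := by field_simp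
  simp only [this] at h
  linarith

/-- The first positive zero of `p` is the integral `∫₀¹ dt / √(1 - t⁶)`. -/
theorem leaf_quarter_period {s p : ℝ → ℝ} (hs : ∀ l, HasDerivAt s (p l) l)
    (hp : ∀ l, HasDerivAt p (-3 * s l ^ 5) l) (h0 : s 0 = 0) (h1 : p 0 = 1)
    {T : ℝ} (hT : T = ∫ t in (0 : ℝ)..1, 1 / Real.sqrt (1 - t ^ 6)) :
    s T = 1 ∧ p T = 0 ∧ ∀ x ∈ Icc 0 T, 0 ≤ p x := by
  have hpc : Continuous p := continuous_iff_continuousAt.2 fun l => (hp l).continuousAt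
  have hsc : Continuous s := continuous_iff_continuousAt.2 fun l => (hs l).continuousAt
  set Z : Set ℝ := {x | 0 ≤ x ∧ p x = 0} with hZ
  have hZc : IsClosed Z :=
    (isClosed_le continuous_const continuous_id).inter (isClosed_eq hpc continuous_const)
  have hZb : BddBelow Z := ⟨0, fun x hx => hx.1⟩
  obtain ⟨hb0, hpb⟩ : sInf Z ∈ Z := hZc.csInf_mem (leaf_exists_zero hs hp h0 h1) hZb
  have hmin : ∀ x, 0 ≤ x → x < sInf Z → p x ≠ 0 := fun x hx hlt h =>
    absurd (csInf_le hZb ⟨hx, h⟩) (not_le.2 hlt)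
  generalize sInf Z = b at hb0 hpb hmin
  have hpos : ∀ x, 0 ≤ x → x < b → 0 < p x := by
    intro x hx hxb
    by_contra! hle
    obtain ⟨z, hz, hz0⟩ := intermediate_value_Icc' hx hpc.continuousOn
      (show (0 : ℝ) ∈ Icc (p x) (p 0) by simp [hle, h1])
    exact hmin z hz.1 (hz.2.trans_lt hxb) hz0
  have hmono : StrictMonoOn s (Icc 0 b) := by
    refine strictMonoOn_of_deriv_pos (convex_Icc 0 b) hsc.continuousOn fun x hx => ?_
    rw [interior_Icc] at hx
    rw [(hs x).deriv]
    exact hpos x hx.1.le hx.2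
  have hsb : s b = 1 := by
    have hnn : 0 ≤ s b := by
      have := hmono.monotoneOn (left_mem_Icc.2 hb0) (right_mem_Icc.2 hb0) hb0
      rwa [h0] at this
    have e := leaf_energy hs hp h0 h1 b
    rw [hpb] at e
    exact (pow_eq_one_iff_of_nonneg hnn (by norm_num : (6 : ℕ) ≠ 0)).1 (by linarith)
  have himg : s '' Ioo 0 b = Ioo 0 1 := by
    apply Subset.antisymm
    · have := hmono.image_Ioo_subset
      rwa [h0, hsb] at this
    · have := intermediate_value_Ioo hb0 hsc.continuousOn
      rwa [h0, hsb] at this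
  have hTb : T = b := by
    rw [hT, intervalIntegral.integral_of_le zero_le_one, MeasureTheory.integral_Ioc_eq_integral_Ioo,
      ← himg, MeasureTheory.integral_image_eq_integral_abs_deriv_smul measurableSet_Ioo
        (fun x _ => (hs x).hasDerivWithinAt) (hmono.injOn.mono Ioo_subset_Icc_self),
      MeasureTheory.setIntegral_congr_fun (g := fun _ => (1 : ℝ)) measurableSet_Ioo]
    · simp [hb0]
    · intro x hx
      have hx' := hpos x hx.1.le hx.2
      have e := leaf_energy hs hp h0 h1 x
      have : 1 - s x ^ 6 = p x ^ 2 := by linarith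
      simp only [this, Real.sqrt_sq hx'.le, abs_of_pos hx', smul_eq_mul]
      field_simp
  rw [hTb]
  refine ⟨hsb, hpb, fun x hx => ?_⟩
  rcases hx.2.lt_or_eq with h | h
  · exact (hpos x hx.1 h).le
  · rw [h, hpb]

theorem leaf_sign {s p : ℝ → ℝ} (hs : ∀ l, HasDerivAt s (p l) l)
    (hp : ∀ l, HasDerivAt p (-3 * s l ^ 5) l) (h0 : s 0 = 0) (h1 : p 0 = 1)
    {T : ℝ} (hT : T = ∫ t in (0 : ℝ)..1, 1 / Real.sqrt (1 - t ^ 6)) (n : ℤ) (l : ℝ) :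
    ((4 * (n : ℝ) - 1) * T ≤ l → l ≤ (4 * (n : ℝ) + 1) * T → 0 ≤ p l) ∧
    ((4 * (n : ℝ) + 1) * T ≤ l → l ≤ (4 * (n : ℝ) + 3) * T → p l ≤ 0) := by
  obtain ⟨hsT, hpT, hpos⟩ := leaf_quarter_period hs hp h0 h1 hT
  have hb := leaf_mem_Icc hs hp h0 h1
  have hodd : ∀ x, s x = -s (-x) ∧ p x = p (-x) := by
    refine leaf_unique hs hp hb (u := fun x => -s (-x)) (q := fun x => p (-x)) ?_ ?_ ?_ 0
      (by simp [h0]) (by simp)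
    · intro x
      refine ((hs (-x)).comp x (hasDerivAt_neg x)).neg.congr_deriv ?_
      ring
    · intro x
      refine ((hp (-x)).comp x (hasDerivAt_neg x)).congr_deriv ?_
      ring
    · intro x
      have := hb (-x)
      exact ⟨by linarith [this.2], by linarith [this.1]⟩
  have hrefl : ∀ x, s x = s (2 * T - x) ∧ p x = -p (2 * T - x) := by
    have hTT : 2 * T - T = T := by ring
    refine leaf_unique hs hp hb (u := fun x => s (2 * T - x)) (q := fun x => -p (2 * T - x))
      ?_ ?_ (fun x => hb _) T (by simp [hTT]) (by simp [hTT, hpT])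
    · exact fun x => HasDerivAt.comp_const_sub (2 * T) x (hs (2 * T - x))
    · intro x
      refine (HasDerivAt.comp_const_sub (2 * T) x (hp (2 * T - x))).neg.congr_deriv ?_
      ring
  have hanti : Function.Antiperiodic p (2 * T) := by
    intro x
    rw [(hrefl (x + 2 * T)).2, (hodd x).2]
    congr 2
    ring
  have hper : Function.Periodic p ((n : ℝ) * (2 * (2 * T))) := by
    simpa using hanti.periodic_two_mul.int_mul n
  have hnn : ∀ l, (4 * (n : ℝ) - 1) * T ≤ l → l ≤ (4 * (n : ℝ) + 1) * T → 0 ≤ p l := by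
    intro l hl hl'
    rw [← hper.sub_eq]
    rcases le_total 0 (l - n * (2 * (2 * T))) with h | h
    · exact hpos _ ⟨h, by linarith⟩
    · rw [(hodd _).2]
      exact hpos _ ⟨by linarith, by linarith⟩
  refine ⟨hnn l, fun hl hl' => ?_⟩
  have h := hnn (l - 2 * T) (by linarith) (by linarith)
  rw [hanti.sub_eq] at h
  linarith

theorem stmt_12 (s : ℝ → ℝ)
    (hs : Differentiable ℝ s) (hs' : Differentiable ℝ (deriv s))
    (hode : ∀ l : ℝ, deriv (deriv s) l = -3 * s l ^ 5)
    (h0 : s 0 = 0) (h1 : deriv s 0 = 1)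
    (π₃ : ℝ) (hπ₃ : π₃ = 2 * ∫ t in (0 : ℝ)..1, 1 / Real.sqrt (1 - t ^ 6))
    (m k : ℤ) (l₁ l₂ : ℝ)
    (hdom :
      ((4 * (m : ℝ) + 1) * π₃ / 2 ≤ l₁ ∧ l₁ ≤ (4 * (m : ℝ) + 3) * π₃ / 2 ∧
        (4 * (k : ℝ) - 1) * π₃ / 2 ≤ l₂ ∧ l₂ ≤ (4 * (k : ℝ) + 1) * π₃ / 2) ∨
      ((4 * (m : ℝ) - 1) * π₃ / 2 ≤ l₁ ∧ l₁ ≤ (4 * (m : ℝ) + 1) * π₃ / 2 ∧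
        (4 * (k : ℝ) + 1) * π₃ / 2 ≤ l₂ ∧ l₂ ≤ (4 * (k : ℝ) + 3) * π₃ / 2)) :
    (s (l₁ + l₂)) ^ 2 =
      ((s l₁ * Real.sqrt (1 - (s l₂) ^ 6) - s l₂ * Real.sqrt (1 - (s l₁) ^ 6)) ^ 2
          + ((s l₁) ^ 3 * s l₂ - s l₁ * (s l₂) ^ 3) ^ 2) /
        (1 + 4 * (s l₁) ^ 4 * (s l₂) ^ 2 + 4 * (s l₁) ^ 2 * (s l₂) ^ 4) := by
  have hd : ∀ l, HasDerivAt s (deriv s l) l := fun l => (hs l).hasDerivAt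
  have hd' : ∀ l, HasDerivAt (deriv s) (-3 * s l ^ 5) l := fun l => by
    rw [← hode]
    exact (hs' l).hasDerivAt
  have hT : π₃ / 2 = ∫ t in (0 : ℝ)..1, 1 / Real.sqrt (1 - t ^ 6) := by rw [hπ₃]; ring
  have hsqrt : ∀ l, Real.sqrt (1 - s l ^ 6) = |deriv s l| := fun l => by
    rw [← Real.sqrt_sq_eq_abs]
    congr 1
    linarith [leaf_energy hd hd' h0 h1 l]
  have hsign := leaf_sign hd hd' h0 h1 hT
  rw [leaf_addition hd hd' h0 h1, hsqrt, hsqrt]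
  simp only [mul_div_assoc] at hdom
  rcases hdom with ⟨a, b, c, d⟩ | ⟨a, b, c, d⟩
  · rw [abs_of_nonpos ((hsign m l₁).2 a b), abs_of_nonneg ((hsign k l₂).1 c d)]
    ring
  · rw [abs_of_nonneg ((hsign m l₁).1 a b), abs_of_nonpos ((hsign k l₂).2 c d)]
    ring
end

section
/- For all real l₁, l₂: (c(l₁ + l₂))² = [ (c(l₁)·s'(l₂) + s(l₂)·c'(l₁))² + ((c(l₁))³·s(l₂) − c(l₁)·(s(l₂))³)² ] / ( 1 + 4·(s(l₂))⁴·(c(l₁))² + 4·(s(l₂))²·(c(l₁))⁴ ) (addition formula for cleaf₃). -/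
/-!
Write `F l₁ l₂` for the right-hand side. Both functions conserve an energy,
`c' ^ 2 + c ^ 6 = 1` and `s' ^ 2 + s ^ 6 = 1`, and modulo these two relations `F` satisfies
`∂F/∂l₁ = ∂F/∂l₂`. Hence `t ↦ F (L - t) t` is constant for each `L`, with value
`F L 0 = c L ^ 2` at `t = 0`; taking `L = l₁ + l₂` and `t = l₂` gives the formula. The vanishing of
the derivative along `t` is the polynomial identity `addition_identity`.
-/

/-- Any solution of `f'' = -3 f ^ 5` conserves `f' ^ 2 + f ^ 6`. -/
lemma leaf_energy_s15 (f : ℝ → ℝ) (hf : Differentiable ℝ f) (hf' : Differentiable ℝ (deriv f))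
    (hode : ∀ l : ℝ, deriv (deriv f) l = -3 * f l ^ 5) (l : ℝ) :
    deriv f l ^ 2 + f l ^ 6 = deriv f 0 ^ 2 + f 0 ^ 6 := by
  have h : ∀ x, HasDerivAt (fun l => deriv f l ^ 2 + f l ^ 6) 0 x := by
    intro x
    have h2 := (hf' x).hasDerivAt
    rw [hode] at h2
    refine ((h2.pow 2).add ((hf x).hasDerivAt.pow 6)).congr_deriv ?_
    push_cast
    ring
  exact is_const_of_deriv_eq_zero (fun x => (h x).differentiableAt) (fun x => (h x).deriv) l 0

/-- The numerator `N' D - N D'` of the derivative of `F (L - t) t`, with `x, X, y, Y` standing for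
`c, c'` at `L - t` and `s, s'` at `t`, vanishes on the energy surfaces. -/
lemma addition_identity (x X y Y : ℝ) (hX : X ^ 2 + x ^ 6 = 1) (hY : Y ^ 2 + y ^ 6 = 1) :
    (2 * (x * Y + y * X) * (3 * x ^ 5 * y - 3 * x * y ^ 5)
        + 2 * (x ^ 3 * y - x * y ^ 3)
          * (x ^ 3 * Y - 3 * x ^ 2 * X * y + X * y ^ 3 - 3 * x * y ^ 2 * Y))
        * (1 + 4 * y ^ 4 * x ^ 2 + 4 * y ^ 2 * x ^ 4)
      - ((x * Y + y * X) ^ 2 + (x ^ 3 * y - x * y ^ 3) ^ 2)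
        * ((-8 * x * y ^ 4 - 16 * x ^ 3 * y ^ 2) * X
          + (16 * y ^ 3 * x ^ 2 + 8 * y * x ^ 4) * Y) = 0 := by
  linear_combination
    (-(y ^ 2 * ((-8 * x * y ^ 4 - 16 * x ^ 3 * y ^ 2) * X
          + (16 * y ^ 3 * x ^ 2 + 8 * y * x ^ 4) * Y)
        + 2 * x * y * (-8 * x * y ^ 4 - 16 * x ^ 3 * y ^ 2) * Y)) * hX
    - (x ^ 2 * ((-8 * x * y ^ 4 - 16 * x ^ 3 * y ^ 2) * X
          + (16 * y ^ 3 * x ^ 2 + 8 * y * x ^ 4) * Y)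
        + 2 * x * y * (16 * y ^ 3 * x ^ 2 + 8 * y * x ^ 4) * X) * hY

theorem stmt_15 (s c : ℝ → ℝ)
    (hs : Differentiable ℝ s) (hs' : Differentiable ℝ (deriv s))
    (hsode : ∀ l : ℝ, deriv (deriv s) l = -3 * s l ^ 5)
    (hs0 : s 0 = 0) (hs1 : deriv s 0 = 1)
    (hc : Differentiable ℝ c) (hc' : Differentiable ℝ (deriv c))
    (hcode : ∀ l : ℝ, deriv (deriv c) l = -3 * c l ^ 5)
    (hc0 : c 0 = 1) (hc1 : deriv c 0 = 0) :
    ∀ l₁ l₂ : ℝ,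
      (c (l₁ + l₂)) ^ 2 =
        ((c l₁ * deriv s l₂ + s l₂ * deriv c l₁) ^ 2
            + ((c l₁) ^ 3 * s l₂ - c l₁ * (s l₂) ^ 3) ^ 2) /
          (1 + 4 * (s l₂) ^ 4 * (c l₁) ^ 2 + 4 * (s l₂) ^ 2 * (c l₁) ^ 4) := by
  intro l₁ l₂
  have key : ∀ t, HasDerivAt (fun t =>
      ((c (l₁ + l₂ - t) * deriv s t + s t * deriv c (l₁ + l₂ - t)) ^ 2
            + ((c (l₁ + l₂ - t)) ^ 3 * s t - c (l₁ + l₂ - t) * (s t) ^ 3) ^ 2) /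
          (1 + 4 * (s t) ^ 4 * (c (l₁ + l₂ - t)) ^ 2
            + 4 * (s t) ^ 2 * (c (l₁ + l₂ - t)) ^ 4)) 0 t := by
    intro t
    have hX := leaf_energy_s15 c hc hc' hcode (l₁ + l₂ - t)
    have hY := leaf_energy_s15 s hs hs' hsode t
    rw [hc0, hc1] at hX
    rw [hs0, hs1] at hY
    have dy := (hs t).hasDerivAt
    have dY := (hs' t).hasDerivAt
    rw [hsode] at dY
    have dx := (hc (l₁ + l₂ - t)).hasDerivAt.comp_const_sub (l₁ + l₂) t
    have dX := (hc' (l₁ + l₂ - t)).hasDerivAt.comp_const_sub (l₁ + l₂) t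
    rw [hcode] at dX
    have dN := (((dx.mul dY).add (dy.mul dX)).pow 2).add
      ((((dx.pow 3).mul dy).sub (dx.mul (dy.pow 3))).pow 2)
    have dD := ((((dy.pow 4).const_mul 4).mul (dx.pow 2)).const_add 1).add
      (((dy.pow 2).const_mul 4).mul (dx.pow 4))
    have hD : (1 + 4 * (s t) ^ 4 * (c (l₁ + l₂ - t)) ^ 2
            + 4 * (s t) ^ 2 * (c (l₁ + l₂ - t)) ^ 4) ≠ 0 := by positivity
    refine (dN.div dD hD).congr_deriv (div_eq_zero_iff.mpr (Or.inl ?_))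
    have := addition_identity (c (l₁ + l₂ - t)) (deriv c (l₁ + l₂ - t)) (s t) (deriv s t)
      (by linarith) (by linarith)
    simp only [Pi.add_apply, Pi.mul_apply, Pi.sub_apply, Pi.pow_apply]
    push_cast
    linear_combination this
  have h := is_const_of_deriv_eq_zero (fun x => (key x).differentiableAt)
    (fun x => (key x).deriv) 0 l₂
  simpa [hs0, hs1] using h
end
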